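/- arXiv:1507.02670 — 2 statements merged into one kernel-verified Lean document; each statement's English description precedes it below -/
import Mathlib

section
/- Any two definitions of area on 2-dimensional normed planes differ by a factor of at most 2: if J and J' are two Jacobians (monotone, degree-2 homogeneous, SL₂-invariant, normalized so that J(s₀) = J'(s₀) = 1 where s₀ is the Euclidean norm), then J(s) ≤ 2·J'(s) for every norm s on ℝ². -/
open Matrix MeasureTheory Real

noncomputable section

/-- The Euclidean plane. -/
abbrev E2 := EuclideanSpace ℝ (Fin 2)

/-- `SL(2,ℝ)` as matrices of determinant one. -/
abbrev SL2 := Matrix.SpecialLinearGroup (Fin 2) ℝ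

/-- The seminorm `v ↦ s (M v)`, i.e. `s ∘ M`. -/
def compM (s : Seminorm ℝ E2) (M : Matrix (Fin 2) (Fin 2) ℝ) : Seminorm ℝ E2 :=
  s.comp (Matrix.toEuclideanLin M)

/-- A seminorm is a norm iff it is positive away from the origin. -/
def IsNorm (s : Seminorm ℝ E2) : Prop := ∀ v : E2, v ≠ 0 → 0 < s v

/-- Monotonicity of a functional on seminorms. -/
def Monot (J : Seminorm ℝ E2 → ℝ) : Prop := ∀ s s' : Seminorm ℝ E2, s' ≤ s → J s' ≤ J s

/-- Degree 2 homogeneity of a functional on seminorms. -/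
def Homog (J : Seminorm ℝ E2 → ℝ) : Prop :=
  ∀ (c : NNReal) (s : Seminorm ℝ E2), J (c • s) = (c : ℝ) ^ 2 * J s

/-- `SL₂`-invariance of a functional on seminorms. -/
def SL2inv (J : Seminorm ℝ E2 → ℝ) : Prop :=
  ∀ (s : Seminorm ℝ E2) (T : SL2), J (compM s (T : Matrix (Fin 2) (Fin 2) ℝ)) = J s

/-- The Reshetnyak energy `I²₊(s) = max_{v ∈ S¹} s(v)²`. -/
def Iplus (s : Seminorm ℝ E2) : ℝ := ⨆ v : Metric.sphere (0 : E2) 1, (s (v : E2)) ^ 2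

/-- The unit ball of a seminorm. -/
def unitBallS (s : Seminorm ℝ E2) : Set E2 := {v | s v ≤ 1}

/-- The ellipse `M(D̄)` is inscribed in the unit ball of `s`. -/
def ellipseIn (s : Seminorm ℝ E2) (M : Matrix (Fin 2) (Fin 2) ℝ) : Prop :=
  (Matrix.toEuclideanLin M) '' (Metric.closedBall 0 1) ⊆ unitBallS s

/-- The area of the largest ellipse inscribed in the unit ball of `s`
(the area of the Loewner ellipse); the ellipse `M(D̄)` has area `π |det M|`. -/
def LoewnerArea (s : Seminorm ℝ E2) : ℝ :=
  sSup {a : ℝ | ∃ M : Matrix (Fin 2) (Fin 2) ℝ, ellipseIn s M ∧ a = π * |M.det|}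

/-- The inscribed Riemannian (Ivanov) Jacobian `J^i(s) = π / |L|`. -/
def Ji (s : Seminorm ℝ E2) : ℝ := π / LoewnerArea s

/-- `s` is isotropic: some round disc `t·D̄` is inscribed in the unit ball of `s` and has at
least the area of every inscribed ellipse, i.e. the Loewner ellipse is a round disc. -/
def Isotropic (s : Seminorm ℝ E2) : Prop :=
  ∃ t : ℝ, 0 < t ∧ Metric.closedBall (0 : E2) t ⊆ unitBallS s ∧
    ∀ M : Matrix (Fin 2) (Fin 2) ℝ, ellipseIn s M → π * |M.det| ≤ π * t ^ 2

/-- A Jacobian (definition of area): monotone, degree-2 homogeneous, `SL₂`-invariant,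
normalized on the Euclidean norm. -/
def IsJacobian (J : Seminorm ℝ E2 → ℝ) : Prop :=
  (∀ s, 0 ≤ J s) ∧ Monot J ∧ Homog J ∧ SL2inv J ∧ J (normSeminorm ℝ E2) = 1

/-!
Among the linear maps `f` with `s ∘ f ≤ ‖·‖`, that is, among the ellipsoids `f(B)` inscribed in the
unit ball of `s`, take one of maximal determinant. If `√n * s (f v) < ‖v‖` for some `v`, then
`s ∘ f` is so small in the direction of `v` that stretching this direction and shrinking everything
slightly gives an inscribed ellipsoid of larger volume; hence `s ∘ f ≤ ‖·‖ ≤ √n • (s ∘ f)`. A volume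
functional `J` satisfies `J (s ∘ f) = det f * J s`, so evaluating one functional on the left
inequality and another on the right one bounds their ratio by `√n ^ n`. A seminorm that vanishes
at some `v ≠ 0` is unchanged by stretching along `v`, so every volume functional is zero on it.
-/

open scoped RealInnerProductSpace

section Stretch

variable {E : Type*} [NormedAddCommGroup E] [InnerProductSpace ℝ E]

/-- The linear map fixing the orthogonal complement of `u` and, if `u` is a unit vector, scaling
the line through `u` by the factor `a`. It produces the ellipsoids of revolution used to
enlarge an inscribed ellipsoid. -/
def stretch (u : E) (a : ℝ) : E →ₗ[ℝ] E :=
  LinearMap.transvection ((a - 1) • innerₛₗ ℝ u) u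

lemma stretch_apply (u : E) (a : ℝ) (v : E) :
    stretch u a v = v + ((a - 1) * ⟪u, v⟫) • u := rfl

lemma det_stretch [FiniteDimensional ℝ E] (u : E) (a : ℝ) :
    LinearMap.det (stretch u a) = 1 + (a - 1) * ‖u‖ ^ 2 := by
  rw [stretch, LinearMap.transvection.det, LinearMap.smul_apply, innerₛₗ_apply_apply,
    real_inner_self_eq_norm_sq, smul_eq_mul]

lemma norm_stretch_sq {u : E} (hu : ‖u‖ = 1) (a : ℝ) (v : E) :
    ‖stretch u a v‖ ^ 2 = ‖v‖ ^ 2 + (a ^ 2 - 1) * ⟪u, v⟫ ^ 2 := by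
  rw [stretch_apply, norm_add_sq_real, real_inner_smul_right, real_inner_comm, norm_smul, hu,
    mul_one, Real.norm_eq_abs, sq_abs]
  ring

lemma stretch_eq_stretch_inv_add (u : E) (a : ℝ) (v : E) :
    stretch u a v = stretch u a⁻¹ v + ((a - a⁻¹) * ⟪u, v⟫) • u := by
  rw [stretch_apply, stretch_apply]
  module

lemma comp_stretch_of_eq_zero {s : Seminorm ℝ E} {u : E} (hu : s u = 0) (a : ℝ) :
    s.comp (stretch u a) = s := by
  ext v
  have h := abs_sub_map_le_sub s (stretch u a v) v
  rw [stretch_apply, add_sub_cancel_left, map_smul_eq_mul, hu, mul_zero, ← stretch_apply] at h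
  exact sub_eq_zero.1 (abs_nonpos_iff.1 h)

end Stretch

section EnlargingEllipsoids

lemma add_sq_le_one_add_mul {t : ℝ} (ht : 0 < t) (x y : ℝ) :
    (x + y) ^ 2 ≤ (1 + t) * (x ^ 2 + y ^ 2 / t) := by
  have h := two_mul_le_add_mul_sq (a := x) (b := y) ht
  calc (x + y) ^ 2 = x ^ 2 + 2 * x * y + y ^ 2 := by ring
    _ ≤ x ^ 2 + (t * x ^ 2 + t⁻¹ * y ^ 2) + y ^ 2 := by gcongr
    _ = (1 + t) * (x ^ 2 + y ^ 2 / t) := by field_simp; ring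

lemma exists_one_add_pow_lt_one_add_mul {n : ℕ} {K : ℝ} (hK : n < K) :
    ∃ t : ℝ, 0 < t ∧ (1 + t) ^ n < 1 + t * K := by
  have hderiv : HasDerivAt (fun t : ℝ ↦ (1 + t) ^ n) n 0 := by
    simpa using ((hasDerivAt_id (0 : ℝ)).const_add 1).fun_pow n
  obtain ⟨t, hslope, (ht : 0 < t)⟩ :=
    ((hderiv.hasDerivWithinAt.liminf_right_slope_le hK).and_eventually self_mem_nhdsWithin).exists
  refine ⟨t, ht, ?_⟩
  rw [slope_def_field, sub_zero, add_zero, one_pow, div_lt_iff₀ ht] at hslope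
  linarith

variable {E : Type*} [NormedAddCommGroup E] [InnerProductSpace ℝ E] {s : Seminorm ℝ E}

lemma sq_apply_add_smul_le (hs : s ≤ normSeminorm ℝ E) {u : E} {K t : ℝ} (hK : 0 < K)
    (hu : K * s u ^ 2 ≤ 1) (ht : 0 < t) (v : E) (c : ℝ) :
    s (v + c • u) ^ 2 ≤ (1 + t) * (‖v‖ ^ 2 + c ^ 2 / (t * K)) := by
  have hsu : s (c • u) ^ 2 ≤ c ^ 2 / K := by
    rw [map_smul_eq_mul, mul_pow, Real.norm_eq_abs, sq_abs, le_div_iff₀' hK, mul_left_comm]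
    exact mul_le_of_le_one_right (sq_nonneg c) hu
  calc s (v + c • u) ^ 2 ≤ (s v + s (c • u)) ^ 2 := by gcongr; exact map_add_le_add s _ _
    _ ≤ (1 + t) * (s v ^ 2 + s (c • u) ^ 2 / t) := add_sq_le_one_add_mul ht _ _
    _ ≤ (1 + t) * (‖v‖ ^ 2 + c ^ 2 / K / t) := by gcongr; exact hs v
    _ = (1 + t) * (‖v‖ ^ 2 + c ^ 2 / (t * K)) := by rw [div_div, mul_comm K t]

lemma sq_apply_stretch_le (hs : s ≤ normSeminorm ℝ E) {u : E} (hu : ‖u‖ = 1) {K t : ℝ}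
    (hK : 0 < K) (hsu : K * s u ^ 2 ≤ 1) (ht : 0 < t) (v : E) :
    s (stretch u √(1 + t * K) v) ^ 2 ≤ (1 + t) * ‖v‖ ^ 2 := by
  have htK : 0 < t * K := mul_pos ht hK
  set a := √(1 + t * K) with ha
  have ha0 : a ≠ 0 := by positivity
  have ha2 : a ^ 2 - 1 = t * K := by rw [ha, Real.sq_sqrt (by positivity), add_sub_cancel_left]
  -- Among the splittings `v' + c • u` of the image, this one minimizes
  -- `‖v'‖ ^ 2 + c ^ 2 / (t * K)`.
  rw [stretch_eq_stretch_inv_add]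
  refine (sq_apply_add_smul_le hs hK hsu ht _ _).trans_eq ?_
  rw [norm_stretch_sq hu, ← ha2]
  have : a ^ 2 - 1 ≠ 0 := ha2 ▸ htK.ne'
  field_simp
  ring

lemma exists_one_lt_det_comp_le [FiniteDimensional ℝ E] (hs : s ≤ normSeminorm ℝ E) {u : E}
    (hu : ‖u‖ = 1) (hsu : Module.finrank ℝ E * s u ^ 2 < 1) :
    ∃ f : E →ₗ[ℝ] E, 1 < LinearMap.det f ∧ s.comp f ≤ normSeminorm ℝ E := by
  set n := Module.finrank ℝ E
  obtain ⟨K, hnK, hK⟩ : ∃ K : ℝ, n < K ∧ K * s u ^ 2 ≤ 1 := by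
    have hsu_le : s u ≤ 1 := (hs u).trans_eq hu
    refine ⟨n + (1 - n * s u ^ 2), by linarith, ?_⟩
    have := mul_le_of_le_one_right (sub_nonneg.2 hsu.le)
      (pow_le_one₀ (n := 2) (apply_nonneg s u) hsu_le)
    linarith
  have hK0 : 0 < K := n.cast_nonneg.trans_lt hnK
  obtain ⟨t, ht, hnt⟩ := exists_one_add_pow_lt_one_add_mul hnK
  refine ⟨(√(1 + t))⁻¹ • stretch u √(1 + t * K), ?_, fun v ↦ ?_⟩
  · rw [LinearMap.det_smul, det_stretch, hu, one_pow, mul_one, add_sub_cancel, inv_pow,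
      one_lt_inv_mul₀ (by positivity)]
    apply Real.lt_sqrt_of_sq_lt
    rwa [← pow_mul, mul_comm, pow_mul, Real.sq_sqrt (by positivity)]
  · rw [Seminorm.comp_apply, LinearMap.smul_apply, map_smul_eq_mul, norm_inv,
      Real.norm_of_nonneg (by positivity), inv_mul_le_iff₀ (by positivity), coe_normSeminorm]
    apply le_of_sq_le_sq _ (by positivity)
    rw [mul_pow, Real.sq_sqrt (by positivity)]
    exact sq_apply_stretch_le hs hu hK0 hK ht v

end EnlargingEllipsoids

section John

variable {E : Type*} [NormedAddCommGroup E]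

section NormedSpace

variable [NormedSpace ℝ E] [FiniteDimensional ℝ E]

lemma continuous_seminorm_of_finiteDimensional (s : Seminorm ℝ E) : Continuous s :=
  s.convexOn.locallyLipschitz.continuous

variable {s : Seminorm ℝ E}

lemma exists_norm_le_mul_seminorm (hs : ∀ v, s v = 0 → v = 0) :
    ∃ C : ℝ, 0 < C ∧ ∀ v, ‖v‖ ≤ C * s v := by
  rcases subsingleton_or_nontrivial E with _ | _
  · exact ⟨1, one_pos, fun v ↦ by simp [Subsingleton.elim v 0]⟩
  obtain ⟨u, hu, hmin⟩ := (isCompact_sphere (0 : E) 1).exists_isMinOn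
    (NormedSpace.sphere_nonempty.2 zero_le_one)
    (continuous_seminorm_of_finiteDimensional s).continuousOn
  have hsu : 0 < s u := (apply_nonneg s u).lt_of_ne'
    (mt (hs u) (ne_zero_of_mem_unit_sphere ⟨u, hu⟩))
  refine ⟨(s u)⁻¹, inv_pos.2 hsu, fun v ↦ ?_⟩
  rcases eq_or_ne v 0 with rfl | hv
  · simp
  have hv' : 0 < ‖v‖ := norm_pos_iff.2 hv
  have h : s u ≤ s (‖v‖⁻¹ • v) :=
    hmin (mem_sphere_zero_iff_norm.2 (norm_smul_inv_norm (𝕜 := ℝ) hv))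
  rw [map_smul_eq_mul, norm_inv, norm_norm, le_inv_mul_iff₀ hv'] at h
  rwa [le_inv_mul_iff₀ hsu, mul_comm]

lemma isCompact_setOf_comp_le (hs : ∀ v, s v = 0 → v = 0) :
    IsCompact {f : E →L[ℝ] E | s.comp (f : E →ₗ[ℝ] E) ≤ normSeminorm ℝ E} := by
  have := FiniteDimensional.proper_real (E →L[ℝ] E)
  obtain ⟨C, hC, hCs⟩ := exists_norm_le_mul_seminorm hs
  refine Metric.isCompact_of_isClosed_isBounded ?_ ?_
  · simp only [Seminorm.le_def, Set.ofPred_forall]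
    refine isClosed_iInter fun v ↦ isClosed_le ?_ continuous_const
    exact (continuous_seminorm_of_finiteDimensional s).comp (continuous_eval_const v)
  · refine isBounded_iff_forall_norm_le.2 ⟨C, fun f hf ↦ f.opNorm_le_bound hC.le fun v ↦ ?_⟩
    exact (hCs (f v)).trans (by gcongr; exact hf v)

lemma exists_pos_det_comp_le (s : Seminorm ℝ E) :
    ∃ f : E →ₗ[ℝ] E, 0 < LinearMap.det f ∧ s.comp f ≤ normSeminorm ℝ E := by
  obtain ⟨C, hC, hCs⟩ := Seminorm.bound_of_continuous_normedSpace s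
    (continuous_seminorm_of_finiteDimensional s)
  refine ⟨C⁻¹ • LinearMap.id, by rw [LinearMap.det_smul, LinearMap.det_id]; positivity, fun v ↦ ?_⟩
  rw [Seminorm.comp_apply, LinearMap.smul_apply, LinearMap.id_apply, map_smul_eq_mul, norm_inv,
    Real.norm_of_nonneg hC.le, inv_mul_le_iff₀ hC]
  exact hCs v

lemma exists_max_det_comp_le (hs : ∀ v, s v = 0 → v = 0) :
    ∃ f : E →ₗ[ℝ] E, 0 < LinearMap.det f ∧ s.comp f ≤ normSeminorm ℝ E ∧
      ∀ g : E →ₗ[ℝ] E, s.comp g ≤ normSeminorm ℝ E → LinearMap.det g ≤ LinearMap.det f := by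
  obtain ⟨f₀, hdet, hf₀⟩ := exists_pos_det_comp_le s
  obtain ⟨f, hf, hmax⟩ := (isCompact_setOf_comp_le hs).exists_isMaxOn
    ⟨f₀.toContinuousLinearMap, hf₀⟩ ContinuousLinearMap.continuous_det.continuousOn
  have hmax' (g : E →ₗ[ℝ] E) (hg : s.comp g ≤ normSeminorm ℝ E) : LinearMap.det g ≤ f.det :=
    hmax (a := g.toContinuousLinearMap) hg
  exact ⟨f, hdet.trans_le (hmax' f₀ hf₀), hf, hmax'⟩

end NormedSpace

theorem exists_john_position [InnerProductSpace ℝ E] [FiniteDimensional ℝ E] {s : Seminorm ℝ E}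
    (hs : ∀ v, s v = 0 → v = 0) :
    ∃ f : E →ₗ[ℝ] E, 0 < LinearMap.det f ∧ s.comp f ≤ normSeminorm ℝ E ∧
      normSeminorm ℝ E ≤ NNReal.sqrt (Module.finrank ℝ E) • s.comp f := by
  obtain ⟨f, hdet, hf, hmax⟩ := exists_max_det_comp_le hs
  refine ⟨f, hdet, hf, fun v ↦ ?_⟩
  rcases eq_or_ne v 0 with rfl | hv
  · simp
  by_contra! hlt
  rw [_root_.smul_apply, NNReal.smul_def, coe_normSeminorm, Real.coe_sqrt, smul_eq_mul,
    NNReal.coe_natCast] at hlt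
  set u := ‖v‖⁻¹ • v
  have hsu : √(Module.finrank ℝ E) * s.comp f u < 1 := by
    rw [map_smul_eq_mul, norm_inv, norm_norm, mul_left_comm, inv_mul_lt_one₀ (norm_pos_iff.2 hv)]
    exact hlt
  have hsu_sq : Module.finrank ℝ E * s.comp f u ^ 2 < 1 := by
    have := pow_lt_one₀ (by positivity) hsu two_ne_zero
    rwa [mul_pow, Real.sq_sqrt (by positivity)] at this
  obtain ⟨g, hg, hfg⟩ := exists_one_lt_det_comp_le hf (norm_smul_inv_norm (𝕜 := ℝ) hv) hsu_sq
  have hle : LinearMap.det (f ∘ₗ g) ≤ LinearMap.det f := hmax (f ∘ₗ g) hfg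
  rw [LinearMap.det_comp] at hle
  exact hle.not_gt (lt_mul_of_one_lt_right hdet hg)

end John

section VolumeFunctional

variable {E : Type*} [NormedAddCommGroup E] [InnerProductSpace ℝ E]

/-- A definition of volume on a Euclidean space `E`, the analogue of `IsJacobian` in every
dimension: `J s` stands for the volume density of the seminorm `s` relative to Lebesgue
measure. The group `SL(E)` is encoded as the endomorphisms of determinant one. -/
structure IsVolumeFunctional (J : Seminorm ℝ E → ℝ) : Prop where
  monotone : Monotone J
  map_smul (c : NNReal) (s : Seminorm ℝ E) : J (c • s) = (c : ℝ) ^ Module.finrank ℝ E * J s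
  map_comp (s : Seminorm ℝ E) (f : E →ₗ[ℝ] E) (hf : LinearMap.det f = 1) : J (s.comp f) = J s
  map_norm : J (normSeminorm ℝ E) = 1

namespace IsVolumeFunctional

variable {J : Seminorm ℝ E → ℝ}

lemma map_comp_of_det_pos (hJ : IsVolumeFunctional J) (s : Seminorm ℝ E) {f : E →ₗ[ℝ] E}
    (hf : 0 < LinearMap.det f) : J (s.comp f) = LinearMap.det f * J s := by
  rcases eq_or_ne (Module.finrank ℝ E) 0 with hn | hn
  · have hdet := LinearMap.det_eq_one_of_finrank_eq_zero hn f
    rw [hJ.map_comp s f hdet, hdet, one_mul]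
  obtain ⟨c, hc⟩ : ∃ c : NNReal, (c : ℝ) ^ Module.finrank ℝ E = LinearMap.det f :=
    ⟨⟨_, Real.rpow_nonneg hf.le _⟩, Real.rpow_inv_natCast_pow hf.le hn⟩
  have hc0 : (c : ℝ) ≠ 0 := fun h ↦ hf.ne' (by rw [← hc, h, zero_pow hn])
  have hcomp : s.comp f = c • s.comp ((c : ℝ)⁻¹ • f) := by
    ext v
    simp [NNReal.smul_def, map_smul_eq_mul, hc0]
  have hdet : LinearMap.det ((c : ℝ)⁻¹ • f) = 1 := by
    rw [LinearMap.det_smul, inv_pow, hc, inv_mul_cancel₀ hf.ne']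
  rw [hcomp, hJ.map_smul, hJ.map_comp s _ hdet, hc]

variable [FiniteDimensional ℝ E]

lemma eq_zero_of_degenerate (hJ : IsVolumeFunctional J) {s : Seminorm ℝ E} {v : E}
    (hv : v ≠ 0) (hsv : s v = 0) : J s = 0 := by
  have hdet : LinearMap.det (stretch v 2) = 1 + ‖v‖ ^ 2 := by rw [det_stretch]; ring
  have h := hJ.map_comp_of_det_pos s (f := stretch v 2) (by rw [hdet]; positivity)
  rw [comp_stretch_of_eq_zero hsv, hdet, add_mul, one_mul, left_eq_add] at h
  exact (mul_eq_zero.1 h).resolve_left (pow_ne_zero 2 (norm_ne_zero_iff.2 hv))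

end IsVolumeFunctional

theorem stmt5_general [FiniteDimensional ℝ E] {J J' : Seminorm ℝ E → ℝ}
    (hJ : IsVolumeFunctional J) (hJ' : IsVolumeFunctional J') (s : Seminorm ℝ E) :
    J s ≤ √(Module.finrank ℝ E) ^ Module.finrank ℝ E * J' s := by
  by_cases hs : ∀ v, s v = 0 → v = 0
  · obtain ⟨f, hdet, hle, hge⟩ := exists_john_position hs
    refine le_of_mul_le_mul_left ?_ hdet
    calc LinearMap.det f * J s = J (s.comp f) := (hJ.map_comp_of_det_pos s hdet).symm
      _ ≤ J (normSeminorm ℝ E) := hJ.monotone hle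
      _ = J' (normSeminorm ℝ E) := by rw [hJ.map_norm, hJ'.map_norm]
      _ ≤ J' (NNReal.sqrt (Module.finrank ℝ E) • s.comp f) := hJ'.monotone hge
      _ = LinearMap.det f * (√(Module.finrank ℝ E) ^ Module.finrank ℝ E * J' s) := by
        rw [hJ'.map_smul, hJ'.map_comp_of_det_pos s hdet, Real.coe_sqrt, NNReal.coe_natCast]
        ring
  · push Not at hs
    obtain ⟨v, hsv, hv⟩ := hs
    rw [hJ.eq_zero_of_degenerate hv hsv, hJ'.eq_zero_of_degenerate hv hsv, mul_zero]

end VolumeFunctional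

lemma IsJacobian.isVolumeFunctional {J : Seminorm ℝ E2 → ℝ} (hJ : IsJacobian J) :
    IsVolumeFunctional J := by
  obtain ⟨-, hmono, hhomog, hinv, hnorm⟩ := hJ
  refine ⟨fun s s' h ↦ hmono s' s h, fun c s ↦ ?_, fun s f hf ↦ ?_, hnorm⟩
  · rw [finrank_euclideanSpace_fin]
    exact hhomog c s
  · obtain ⟨M, rfl⟩ := Matrix.toEuclideanLin.surjective f
    rw [LinearMap.det_toLpLin] at hf
    exact hinv s ⟨M, hf⟩

/-- Any two normalized Jacobians differ by a factor of at most `2` on every norm. -/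
theorem stmt5 (J J' : Seminorm ℝ E2 → ℝ) (hJ : IsJacobian J) (hJ' : IsJacobian J')
    (s : Seminorm ℝ E2) (hs : IsNorm s) :
    J s ≤ 2 * J' s := by
  simpa using stmt5_general hJ.isVolumeFunctional hJ'.isVolumeFunctional s
end
end

section
/- For the Reshetnyak energy I²₊(s) = max_{v∈S¹} s(v)², the induced Jacobian J(s) = inf{I²₊(s∘T) : T ∈ SL(2,ℝ)} equals the inscribed Riemannian Jacobian: J(s) = π / |L| for every norm s, where |L| is the Lebesgue area of the largest-area ellipse contained in the unit ball of s. In particular J(s₀) = 1 for the Euclidean norm s₀. -/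
open Matrix MeasureTheory Real

noncomputable section

/-- `Ĵ(s) = inf {I(s ∘ T) : T ∈ SL(2,ℝ)}`. -/
def Jhat (I : Seminorm ℝ E2 → ℝ) (s : Seminorm ℝ E2) : ℝ :=
  ⨅ T : SL2, I (compM s (T : Matrix (Fin 2) (Fin 2) ℝ))

/-!
An ellipse `M(D̄)` lies in the unit ball of `s` exactly when `I²₊(s ∘ M) ≤ 1`. Every invertible `M`
becomes `c • T` with `T ∈ SL(2,ℝ)` and `c² = |det M|` after composition with an orthogonal matrix
correcting the sign of `det M`; as `I²₊` is homogeneous of degree 2 and not increased by orthogonal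
maps, `|det M| · J(s) ≤ I²₊(s ∘ M)`. So `π / J(s)` bounds the area of every inscribed ellipse, and
the ellipses `I²₊(s ∘ T)^(-1/2) T(D̄)` show that no smaller bound works. Finally
`0 < J(s)`: by monotonicity it suffices to compare `s` with a multiple of the Euclidean norm, for
which Hadamard's inequality gives `|det M| ≤ I²₊(‖·‖ ∘ M)`.
-/

theorem continuous_seminorm {E : Type*} [NormedAddCommGroup E] [NormedSpace ℝ E]
    [FiniteDimensional ℝ E] (s : Seminorm ℝ E) : Continuous s :=
  continuousOn_univ.mp (s.convexOn.continuousOn isOpen_univ)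

theorem norm_mul_seminorm_inv_norm_smul {E : Type*} [NormedAddCommGroup E] [NormedSpace ℝ E]
    (s : Seminorm ℝ E) (v : E) : ‖v‖ * s (‖v‖⁻¹ • v) = s v := by
  obtain rfl | hv := eq_or_ne v 0
  · simp
  rw [map_smul_eq_mul, norm_inv, norm_norm, mul_inv_cancel_left₀ (norm_ne_zero_iff.mpr hv)]

theorem exists_pos_smul_normSeminorm_le {E : Type*} [NormedAddCommGroup E] [NormedSpace ℝ E]
    [FiniteDimensional ℝ E] {s : Seminorm ℝ E} (hs : ∀ v, v ≠ 0 → 0 < s v) :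
    ∃ c : NNReal, 0 < c ∧ c • normSeminorm ℝ E ≤ s := by
  obtain ⟨c, hc, hcs⟩ : ∃ c : ℝ, 0 < c ∧ ∀ u ∈ Metric.sphere (0 : E) 1, c ≤ s u :=
    (isCompact_sphere 0 1).exists_forall_le' (continuous_seminorm s).continuousOn
      fun u hu => hs u (ne_zero_of_mem_unit_sphere ⟨u, hu⟩)
  refine ⟨⟨c, hc.le⟩, hc, fun v => ?_⟩
  obtain rfl | hv := eq_or_ne v 0
  · simp
  have hu : ‖v‖⁻¹ • v ∈ Metric.sphere (0 : E) 1 := by simp [norm_smul, hv]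
  calc c * ‖v‖ = ‖v‖ * c := mul_comm _ _
    _ ≤ ‖v‖ * s (‖v‖⁻¹ • v) := by gcongr; exact hcs _ hu
    _ = s v := norm_mul_seminorm_inv_norm_smul s v

theorem abs_det_le_prod_norm_col {n : ℕ} (M : Matrix (Fin n) (Fin n) ℝ) :
    |M.det| ≤ ∏ j, ‖WithLp.toLp 2 (M.col j)‖ := by
  have : Fact (Module.finrank ℝ (EuclideanSpace ℝ (Fin n)) = n) := ⟨finrank_euclideanSpace_fin⟩
  let b := EuclideanSpace.basisFun (Fin n) ℝ
  have hM : b.toBasis.toMatrix (fun j => WithLp.toLp 2 (M.col j)) = M := by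
    ext i j
    simp [b, Module.Basis.toMatrix_apply]
  have h := b.toBasis.orientation.abs_volumeForm_apply_le fun j => WithLp.toLp 2 (M.col j)
  rwa [Orientation.volumeForm_robust _ b rfl, Module.Basis.det_apply, hM] at h

section Matrix

variable {n : Type*} [Fintype n] [DecidableEq n]

theorem norm_toEuclideanLin_of_mem_orthogonalGroup {Q : Matrix n n ℝ}
    (hQ : Q ∈ orthogonalGroup n ℝ) (v : EuclideanSpace ℝ n) : ‖toEuclideanLin Q v‖ = ‖v‖ :=
  ContinuousLinearMap.norm_map_of_mem_unitary
    (Unitary.map_mem (toEuclideanCLM (n := n) (𝕜 := ℝ)) hQ) v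

theorem exists_mem_orthogonalGroup_det_eq [Nonempty n] {σ : ℝ} (hσ : σ * σ = 1) :
    ∃ Q ∈ orthogonalGroup n ℝ, Q.det = σ := by
  obtain ⟨i⟩ := ‹Nonempty n›
  refine ⟨diagonal (Function.update 1 i σ), ?_, ?_⟩
  · rw [mem_orthogonalGroup_iff, diagonal_transpose, diagonal_mul_diagonal, ← diagonal_one]
    congr 1
    ext j
    obtain rfl | hj := eq_or_ne j i <;> simp [*]
  · simp [det_diagonal, Finset.prod_update_of_mem]

theorem exists_eq_smul_specialLinearGroup [Nonempty n] {M : Matrix n n ℝ} (hM : 0 < M.det) :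
    ∃ c : ℝ, c ^ Fintype.card n = M.det ∧
      ∃ T : SpecialLinearGroup n ℝ, M = c • (T : Matrix n n ℝ) := by
  obtain ⟨c, hc, hcM⟩ : ∃ c : ℝ, 0 < c ∧ c ^ Fintype.card n = M.det :=
    ⟨M.det ^ (Fintype.card n : ℝ)⁻¹, rpow_pos_of_pos hM _,
      rpow_inv_natCast_pow hM.le Fintype.card_ne_zero⟩
  refine ⟨c, hcM, ⟨c⁻¹ • M, ?_⟩, (smul_inv_smul₀ hc.ne' M).symm⟩
  rw [det_smul, inv_pow, hcM, inv_mul_cancel₀ hM.ne']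

theorem exists_mem_orthogonalGroup_mul_eq_smul_specialLinearGroup [Nonempty n]
    {M : Matrix n n ℝ} (hM : M.det ≠ 0) :
    ∃ c : ℝ, c ^ Fintype.card n = |M.det| ∧ ∃ T : SpecialLinearGroup n ℝ,
      ∃ Q ∈ orthogonalGroup n ℝ, M * Q = c • (T : Matrix n n ℝ) := by
  obtain ⟨σ, hσ, hσM⟩ : ∃ σ : ℝ, σ * σ = 1 ∧ M.det * σ = |M.det| := by
    obtain h | h := abs_choice M.det
    · exact ⟨1, by simp, by simp [h]⟩
    · exact ⟨-1, by simp, by simp [h]⟩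
  obtain ⟨Q, hQ, hQσ⟩ := exists_mem_orthogonalGroup_det_eq (n := n) hσ
  have hdet : (M * Q).det = |M.det| := by rw [det_mul, hQσ, hσM]
  obtain ⟨c, hc, T, hT⟩ :=
    exists_eq_smul_specialLinearGroup (hdet ▸ abs_pos.mpr hM : 0 < (M * Q).det)
  exact ⟨c, hc.trans hdet, T, Q, hQ, hT⟩

end Matrix

section compM

variable (s : Seminorm ℝ E2) (M N : Matrix (Fin 2) (Fin 2) ℝ)

theorem compM_mul : compM s (M * N) = compM (compM s M) N := by
  ext v
  simp [compM]

theorem compM_smul (c : ℝ) : compM s (c • M) = ‖c‖₊ • compM s M := by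
  ext v
  simp [compM, map_smul_eq_mul, NNReal.smul_def]

theorem smul_compM (c : NNReal) : compM (c • s) M = c • compM s M := rfl

end compM

section Iplus

theorem Iplus_nonneg (s : Seminorm ℝ E2) : 0 ≤ Iplus s :=
  Real.iSup_nonneg fun _ => sq_nonneg _

theorem sq_le_Iplus_mul_norm_sq (s : Seminorm ℝ E2) (v : E2) : s v ^ 2 ≤ Iplus s * ‖v‖ ^ 2 := by
  obtain rfl | hv := eq_or_ne v 0
  · simp
  have hbdd : BddAbove (Set.range fun u : Metric.sphere (0 : E2) 1 => s (u : E2) ^ 2) :=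
    have := continuous_seminorm s
    (isCompact_range (by fun_prop)).bddAbove
  have hu : ‖v‖⁻¹ • v ∈ Metric.sphere (0 : E2) 1 := by simp [norm_smul, hv]
  calc s v ^ 2 = s (‖v‖⁻¹ • v) ^ 2 * ‖v‖ ^ 2 := by
        rw [← mul_pow, mul_comm, norm_mul_seminorm_inv_norm_smul]
    _ ≤ Iplus s * ‖v‖ ^ 2 := by gcongr; exact le_ciSup hbdd ⟨_, hu⟩

theorem Iplus_le_iff {s : Seminorm ℝ E2} {K : ℝ} :
    Iplus s ≤ K ↔ ∀ v, s v ^ 2 ≤ K * ‖v‖ ^ 2 := by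
  refine ⟨fun h v => (sq_le_Iplus_mul_norm_sq s v).trans (by gcongr), fun h => ?_⟩
  have : Nonempty (Metric.sphere (0 : E2) 1) :=
    (NormedSpace.sphere_nonempty.mpr zero_le_one).to_subtype
  exact ciSup_le fun u => by simpa using h u

theorem monot_Iplus : Monot Iplus := fun s s' h =>
  Iplus_le_iff.mpr fun v =>
    (pow_le_pow_left₀ (apply_nonneg s' v) (h v) 2).trans (sq_le_Iplus_mul_norm_sq s v)

theorem homog_Iplus : Homog Iplus := fun c _ => by
  simp_rw [Iplus, Real.mul_iSup_of_nonneg (sq_nonneg (c : ℝ)), ← mul_pow]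
  rfl

theorem Iplus_compM_smul (s : Seminorm ℝ E2) (c : ℝ) (M : Matrix (Fin 2) (Fin 2) ℝ) :
    Iplus (compM s (c • M)) = c ^ 2 * Iplus (compM s M) := by
  rw [compM_smul, homog_Iplus, coe_nnnorm, norm_eq_abs, sq_abs]

theorem Iplus_compM_le_of_mem_orthogonalGroup (s : Seminorm ℝ E2) {Q : Matrix (Fin 2) (Fin 2) ℝ}
    (hQ : Q ∈ orthogonalGroup (Fin 2) ℝ) : Iplus (compM s Q) ≤ Iplus s :=
  Iplus_le_iff.mpr fun v =>
    norm_toEuclideanLin_of_mem_orthogonalGroup hQ v ▸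
      sq_le_Iplus_mul_norm_sq s (toEuclideanLin Q v)

theorem Iplus_normSeminorm_le_one : Iplus (normSeminorm ℝ E2) ≤ 1 :=
  Iplus_le_iff.mpr fun v => by simp

theorem abs_det_le_Iplus_compM_normSeminorm (M : Matrix (Fin 2) (Fin 2) ℝ) :
    |M.det| ≤ Iplus (compM (normSeminorm ℝ E2) M) := by
  have hcol (j : Fin 2) :
      ‖WithLp.toLp 2 (M.col j)‖ ≤ √(Iplus (compM (normSeminorm ℝ E2) M)) := by
    refine Real.le_sqrt_of_sq_le ?_
    have hMj : toEuclideanLin M (EuclideanSpace.single j 1) = WithLp.toLp 2 (M.col j) := by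
      simp [toLpLin_apply]
    simpa [compM, hMj] using
      sq_le_Iplus_mul_norm_sq (compM (normSeminorm ℝ E2) M) (EuclideanSpace.single j 1)
  calc |M.det| ≤ ∏ j, ‖WithLp.toLp 2 (M.col j)‖ := abs_det_le_prod_norm_col M
    _ ≤ ∏ _j : Fin 2, √(Iplus (compM (normSeminorm ℝ E2) M)) := by gcongr with j; exact hcol j
    _ = Iplus (compM (normSeminorm ℝ E2) M) := by simp [Real.sq_sqrt (Iplus_nonneg _)]

theorem ellipseIn_iff_Iplus_compM_le_one {s : Seminorm ℝ E2} {M : Matrix (Fin 2) (Fin 2) ℝ} :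
    ellipseIn s M ↔ Iplus (compM s M) ≤ 1 := by
  rw [Iplus_le_iff, ellipseIn, Set.image_subset_iff]
  simp only [one_mul, sq_le_sq₀ (apply_nonneg _ _) (norm_nonneg _)]
  refine ⟨fun h v => ?_, fun h v hv => (h v).trans (mem_closedBall_zero_iff.mp hv)⟩
  have hu : ‖v‖⁻¹ • v ∈ Metric.closedBall (0 : E2) 1 := by
    simpa [norm_smul] using inv_mul_le_one
  rw [← norm_mul_seminorm_inv_norm_smul]
  exact mul_le_of_le_one_right (norm_nonneg v) (h hu)

end Iplus

section Jhat

variable {I : Seminorm ℝ E2 → ℝ}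

theorem Jhat_le (hI : ∀ s, 0 ≤ I s) (s : Seminorm ℝ E2) (T : SL2) :
    Jhat I s ≤ I (compM s (T : Matrix (Fin 2) (Fin 2) ℝ)) :=
  ciInf_le ⟨0, Set.forall_mem_range.mpr fun _ => hI _⟩ T

theorem monot_Jhat (hI : ∀ s, 0 ≤ I s) (hmono : Monot I) : Monot (Jhat I) := fun _ s' h =>
  le_ciInf fun T => (Jhat_le hI s' T).trans (hmono _ _ fun v => h (toEuclideanLin T.1 v))

theorem homog_Jhat (hhom : Homog I) : Homog (Jhat I) := fun c _ => by
  simp_rw [Jhat, Real.mul_iInf_of_nonneg (sq_nonneg (c : ℝ)), smul_compM, hhom c]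

theorem Jhat_Iplus_normSeminorm : Jhat Iplus (normSeminorm ℝ E2) = 1 := by
  refine le_antisymm ?_ (le_ciInf fun T => ?_)
  · refine (Jhat_le Iplus_nonneg _ 1).trans ?_
    simpa [compM] using Iplus_normSeminorm_le_one
  · simpa using abs_det_le_Iplus_compM_normSeminorm T.1

theorem Jhat_Iplus_pos {s : Seminorm ℝ E2} (hs : IsNorm s) : 0 < Jhat Iplus s := by
  obtain ⟨c, hc, hcs⟩ := exists_pos_smul_normSeminorm_le hs
  calc 0 < (c : ℝ) ^ 2 * Jhat Iplus (normSeminorm ℝ E2) := by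
        rw [Jhat_Iplus_normSeminorm]; positivity
    _ = Jhat Iplus (c • normSeminorm ℝ E2) := (homog_Jhat homog_Iplus _ _).symm
    _ ≤ Jhat Iplus s := monot_Jhat Iplus_nonneg monot_Iplus _ _ hcs

theorem abs_det_mul_Jhat_Iplus_le (s : Seminorm ℝ E2) (M : Matrix (Fin 2) (Fin 2) ℝ) :
    |M.det| * Jhat Iplus s ≤ Iplus (compM s M) := by
  obtain hM | hM := eq_or_ne M.det 0
  · simpa [hM] using Iplus_nonneg _
  obtain ⟨c, hc, T, Q, hQ, hMQ⟩ := exists_mem_orthogonalGroup_mul_eq_smul_specialLinearGroup hM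
  rw [Fintype.card_fin] at hc
  calc |M.det| * Jhat Iplus s
      ≤ c ^ 2 * Iplus (compM s (T : Matrix (Fin 2) (Fin 2) ℝ)) := by
        rw [hc]; gcongr; exact Jhat_le Iplus_nonneg s T
    _ = Iplus (compM (compM s M) Q) := by rw [← Iplus_compM_smul, ← hMQ, compM_mul]
    _ ≤ Iplus (compM s M) := Iplus_compM_le_of_mem_orthogonalGroup _ hQ

theorem exists_ellipseIn_abs_det_eq_inv {s : Seminorm ℝ E2} {T : SL2}
    (hT : 0 < Iplus (compM s (T : Matrix (Fin 2) (Fin 2) ℝ))) :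
    ∃ M, ellipseIn s M ∧ |M.det| = (Iplus (compM s (T : Matrix (Fin 2) (Fin 2) ℝ)))⁻¹ := by
  set R := Iplus (compM s (T : Matrix (Fin 2) (Fin 2) ℝ))
  have hR : (√R)⁻¹ ^ 2 = R⁻¹ := by rw [inv_pow, sq_sqrt hT.le]
  refine ⟨(√R)⁻¹ • (T : Matrix (Fin 2) (Fin 2) ℝ), ?_, ?_⟩
  · rw [ellipseIn_iff_Iplus_compM_le_one, Iplus_compM_smul, hR, inv_mul_cancel₀ hT.ne']
  · rw [det_smul, T.det_coe, Fintype.card_fin, hR, mul_one, abs_of_pos (inv_pos.mpr hT)]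

theorem isLUB_area_ellipseIn {s : Seminorm ℝ E2} (hs : IsNorm s) :
    IsLUB {a : ℝ | ∃ M : Matrix (Fin 2) (Fin 2) ℝ, ellipseIn s M ∧ a = π * |M.det|}
      (π / Jhat Iplus s) := by
  have hJ := Jhat_Iplus_pos hs
  constructor
  · rintro _ ⟨M, hM, rfl⟩
    rw [le_div_iff₀ hJ, mul_assoc]
    exact mul_le_of_le_one_right pi_pos.le
      ((abs_det_mul_Jhat_Iplus_le s M).trans (ellipseIn_iff_Iplus_compM_le_one.mp hM))
  · intro b hb
    have hT (T : SL2) : 0 < Iplus (compM s (T : Matrix (Fin 2) (Fin 2) ℝ)) :=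
      hJ.trans_le (Jhat_le Iplus_nonneg s T)
    have hTb (T : SL2) : π / Iplus (compM s (T : Matrix (Fin 2) (Fin 2) ℝ)) ≤ b := by
      obtain ⟨M, hM, hdet⟩ := exists_ellipseIn_abs_det_eq_inv (hT T)
      exact hb ⟨M, hM, by rw [hdet, div_eq_mul_inv]⟩
    have hb_pos : 0 < b := (div_pos pi_pos (hT 1)).trans_le (hTb 1)
    exact (div_le_comm₀ hb_pos hJ).mp (le_ciInf fun T => (div_le_comm₀ (hT T) hb_pos).mp (hTb T))

end Jhat

theorem LoewnerArea_eq_pi_div_Jhat_Iplus {s : Seminorm ℝ E2} (hs : IsNorm s) :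
    LoewnerArea s = π / Jhat Iplus s :=
  (isLUB_area_ellipseIn hs).csSup_eq
    ⟨0, 0, ellipseIn_iff_Iplus_compM_le_one.mpr (Iplus_le_iff.mpr (by simp [compM])), by simp⟩

/-- The Jacobian induced by the Reshetnyak energy is the inscribed Riemannian Jacobian
`π / |L|`; in particular it is normalized on the Euclidean norm. -/
theorem stmt15 :
    (∀ s : Seminorm ℝ E2, IsNorm s → Jhat Iplus s = π / LoewnerArea s) ∧
      Jhat Iplus (normSeminorm ℝ E2) = 1 :=
  ⟨fun s hs => by rw [LoewnerArea_eq_pi_div_Jhat_Iplus hs, div_div_cancel₀ pi_ne_zero],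
    Jhat_Iplus_normSeminorm⟩
end
end
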